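/- Let a, b, c be the vertices of an equilateral triangle in ℝ² and let o be its center (centroid). Then every spanning tour of the four-point set {a, b, c, o} has a rotation angle of at least 2π/3 at some vertex. -/

import Mathlib

open EuclideanGeometry Real

/-! The tour passes through the center `o`, and the two neighbours of `o` on it are distinct
vertices of the triangle. The angle subtended at `o` by two vertices of a regular simplex with `N`
vertices is `arccos (-1 / (N - 1))`: writing `u i` for the vectors from `o` to the vertices, the
inner products `⟪u i, u j⟫` with `i ≠ j` share a common value `c`, the `‖u i‖ ^ 2` a common value
`R`, and pairing `u i` with `∑ k, u k = 0` gives `R + (N - 1) * c = 0`. For `N = 3` this is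
`2 * π / 3`. -/

section SumEqZero

variable {ι V : Type*} [NormedAddCommGroup V] [InnerProductSpace ℝ V]

lemma sum_norm_sub_sq_of_sum_eq_zero {s : Finset ι} {u : ι → V} (hsum : ∑ k ∈ s, u k = 0)
    (x : V) : ∑ k ∈ s, ‖x - u k‖ ^ 2 = s.card * ‖x‖ ^ 2 + ∑ k ∈ s, ‖u k‖ ^ 2 := by
  simp only [norm_sub_sq_real, Finset.sum_add_distrib, Finset.sum_sub_distrib, ← Finset.mul_sum,
    ← inner_sum, hsum, inner_zero_right, mul_zero, sub_zero, Finset.sum_const, nsmul_eq_mul]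

variable [Fintype ι]

lemma sum_eq_add_card_sub_one_mul {R : Type*} [Ring R] {g : ι → R} {i : ι} {c : R}
    (hg : ∀ k, k ≠ i → g k = c) : ∑ k, g k = g i + (Fintype.card ι - 1) * c := by
  classical
  have hcard : 1 ≤ Fintype.card ι := Fintype.card_pos_iff.2 ⟨i⟩
  rw [← Finset.add_sum_erase _ _ (Finset.mem_univ i),
    Finset.sum_congr rfl fun k hk ↦ hg k (Finset.ne_of_mem_erase hk), Finset.sum_const,
    Finset.card_erase_of_mem (Finset.mem_univ i), Finset.card_univ, nsmul_eq_mul,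
    Nat.cast_sub hcard, Nat.cast_one]

lemma norm_eq_norm_of_pairwise_norm_sub_eq {u : ι → V} {r : ℝ} (hsum : ∑ k, u k = 0)
    (hdist : Pairwise fun i j ↦ ‖u i - u j‖ = r) (i j : ι) : ‖u i‖ = ‖u j‖ := by
  have sum_sq_eq (l : ι) : Fintype.card ι * ‖u l‖ ^ 2 + ∑ k, ‖u k‖ ^ 2 =
      (Fintype.card ι - 1) * r ^ 2 := by
    have hl : ∀ k, k ≠ l → ‖u l - u k‖ ^ 2 = r ^ 2 := fun k hk ↦ by rw [hdist hk.symm]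
    rw [← Finset.card_univ, ← sum_norm_sub_sq_of_sum_eq_zero hsum, sum_eq_add_card_sub_one_mul hl]
    simp
  have hcard : (Fintype.card ι : ℝ) ≠ 0 := Nat.cast_ne_zero.2 (Fintype.card_pos_iff.2 ⟨i⟩).ne'
  have hsq : ‖u i‖ ^ 2 = ‖u j‖ ^ 2 :=
    mul_left_cancel₀ hcard (add_right_cancel ((sum_sq_eq i).trans (sum_sq_eq j).symm))
  exact (sq_eq_sq₀ (norm_nonneg _) (norm_nonneg _)).1 hsq

lemma angle_eq_arccos_of_pairwise_norm_sub_eq {u : ι → V} {r : ℝ} (hsum : ∑ k, u k = 0)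
    (hdist : Pairwise fun i j ↦ ‖u i - u j‖ = r) {i j : ι} (hij : i ≠ j) (hi : u i ≠ 0) :
    InnerProductGeometry.angle (u i) (u j) = arccos (-(Fintype.card ι - 1 : ℝ)⁻¹) := by
  have hnorm := norm_eq_norm_of_pairwise_norm_sub_eq hsum hdist
  have inner_eq (k : ι) (hk : k ≠ i) : inner ℝ (u i) (u k) = inner ℝ (u i) (u j) := by
    rw [real_inner_eq_norm_mul_self_add_norm_mul_self_sub_norm_sub_mul_self_div_two,
      real_inner_eq_norm_mul_self_add_norm_mul_self_sub_norm_sub_mul_self_div_two,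
      hdist hk.symm, hdist hij, hnorm k j]
  have balance : ‖u i‖ ^ 2 + (Fintype.card ι - 1) * inner ℝ (u i) (u j) = 0 := by
    rw [← real_inner_self_eq_norm_sq, ← sum_eq_add_card_sub_one_mul inner_eq, ← inner_sum, hsum,
      inner_zero_right]
  have hnorm_ne : ‖u i‖ ≠ 0 := norm_ne_zero_iff.2 hi
  have hcard : (Fintype.card ι - 1 : ℝ) ≠ 0 := by
    intro h
    simp [h, hi] at balance
  rw [InnerProductGeometry.angle, ← hnorm i j]
  congr 1
  field_simp
  linear_combination balance

end SumEqZero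

lemma exists_neighbors_of_range_eq_insert {α ι : Type*} {v : ι → α} {o : α} {n : ℕ} (hn : 2 < n)
    {f : ZMod n → α} (hinj : f.Injective) (hrange : Set.range f = insert o (Set.range v))
    {i : ZMod n} (hi : f i = o) : ∃ j k, j ≠ k ∧ f (i - 1) = v j ∧ f (i + 1) = v k := by
  have htwo : (2 : ZMod n) ≠ 0 := fun h ↦
    Nat.not_dvd_of_pos_of_lt two_pos hn ((ZMod.natCast_eq_zero_iff 2 n).1 (mod_cast h))
  have : Fact (1 < n) := ⟨by lia⟩
  have mem_range (m : ZMod n) (hm : m ≠ i) : f m ∈ Set.range v :=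
    (hrange ▸ Set.mem_range_self m : f m ∈ insert o (Set.range v)).resolve_left
      (hi ▸ hinj.ne hm)
  obtain ⟨j, hj⟩ := mem_range (i - 1) (by simp)
  obtain ⟨k, hk⟩ := mem_range (i + 1) (by simp)
  refine ⟨j, k, ?_, hj.symm, hk.symm⟩
  rintro rfl
  have hstep : i - 1 = i + 1 := hinj (hj.symm.trans hk)
  exact htwo (by linear_combination -hstep)

-- `hcenter` says that `o` is the centroid of the points `v i`.
theorem equilateral_with_center_tour_angle_general {ι V P : Type*} [Fintype ι]
    [NormedAddCommGroup V] [InnerProductSpace ℝ V] [MetricSpace P] [NormedAddTorsor V P]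
    {v : ι → P} {o : P} {r : ℝ} (hdist : Pairwise fun i j ↦ dist (v i) (v j) = r)
    (hcenter : ∑ i, (v i -ᵥ o) = 0) {n : ℕ} (hn : 2 < n) {f : ZMod n → P}
    (hinj : f.Injective) (hrange : Set.range f = insert o (Set.range v)) :
    ∃ i, f i = o ∧
      ∠ (f (i - 1)) (f i) (f (i + 1)) = arccos (-(Fintype.card ι - 1 : ℝ)⁻¹) := by
  obtain ⟨i, hi⟩ : o ∈ Set.range f := hrange ▸ Set.mem_insert o _
  obtain ⟨j, k, hjk, hj, hk⟩ := exists_neighbors_of_range_eq_insert hn hinj hrange hi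
  have : Fact (1 < n) := ⟨by lia⟩
  have hjo : v j -ᵥ o ≠ 0 := by
    rw [vsub_ne_zero, ← hj, ← hi]
    exact hinj.ne (by simp)
  have hdist' : Pairwise fun i j ↦ ‖(v i -ᵥ o) - (v j -ᵥ o)‖ = r := by
    simpa only [vsub_sub_vsub_cancel_right, ← dist_eq_norm_vsub] using hdist
  refine ⟨i, hi, ?_⟩
  rw [hi, hj, hk]
  exact angle_eq_arccos_of_pairwise_norm_sub_eq hcenter hdist' hjk hjo

lemma pairwise_dist_vecCons_eq {P : Type*} [PseudoMetricSpace P] {a b c : P}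
    (habc : dist a b = dist b c) (hbca : dist b c = dist c a) :
    Pairwise fun i j ↦ dist (![a, b, c] i) (![a, b, c] j) = dist a b := by
  intro i j hij
  fin_cases i <;> fin_cases j <;> simp_all [dist_comm]

lemma sum_sub_eq_zero_of_eq_inv_three_smul {K V : Type*} [Field K] [CharZero K]
    [AddCommGroup V] [Module K V] {a b c o : V} (ho : o = (3 : K)⁻¹ • (a + b + c)) :
    ∑ i, (![a, b, c] i - o) = 0 := by
  simp only [Fin.sum_univ_three, Matrix.cons_val, ho]
  module

lemma arccos_neg_inv_two : arccos (-2⁻¹) = 2 * π / 3 := by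
  rw [arccos_neg, ← one_div, ← cos_pi_div_three, arccos_cos (by positivity) (by linarith [pi_pos])]
  ring

/-- For the three vertices of an equilateral triangle together with its centroid, every
spanning tour of these four points has a rotation angle of at least `2π/3` at some vertex. -/
theorem equilateral_with_center_tour_angle
    (a b c o : EuclideanSpace ℝ (Fin 2))
    (hdist : dist a b = dist b c ∧ dist b c = dist c a) (hpos : 0 < dist a b)
    (ho : o = (3 : ℝ)⁻¹ • (a + b + c))
    (f : ZMod 4 → EuclideanSpace ℝ (Fin 2))
    (hinj : Function.Injective f)
    (hrange : Set.range f = ({a, b, c, o} : Set (EuclideanSpace ℝ (Fin 2)))) :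
    ∃ i : ZMod 4,
      2 * π / 3 ≤ EuclideanGeometry.angle (f (i - 1)) (f i) (f (i + 1)) := by
  have hrange' : Set.range f = insert o (Set.range ![a, b, c]) := by
    rw [hrange]
    ext x
    simp only [Matrix.range_cons, Matrix.range_empty, Set.mem_insert_iff, Set.mem_singleton_iff,
      Set.mem_union, Set.mem_empty_iff_false]
    tauto
  obtain ⟨i, -, hangle⟩ := equilateral_with_center_tour_angle_general
    (pairwise_dist_vecCons_eq hdist.1 hdist.2) (sum_sub_eq_zero_of_eq_inv_three_smul ho)
    (by norm_num) hinj hrange'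
  refine ⟨i, (hangle.trans ?_).ge⟩
  norm_num [← arccos_neg_inv_two]
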